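/- arXiv:math/0603035 — 2 statements merged into one kernel-verified Lean document; each statement's English description precedes it below -/
import Mathlib

section
/- Let ρ be a mollifier on ℝ^d and let f : ℝ^d → ℂ be a smooth function belonging to O_C(ℝ^d), i.e. there exists q ∈ ℕ such that μ_{-q,l}(f) < +∞ for every l ∈ ℕ. Then the net ((f ∗ ρ_ε) − f)_{ε∈(0,1]}, where (f ∗ ρ_ε)(x) = ∫_{ℝ^d} f(x−y) ρ_ε(y) dy, belongs to N_τ(ℝ^d). (Thus the regularization embedding ι_τ agrees with the constant embedding σ_τ on O_C(ℝ^d).) -/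
open MeasureTheory Filter

noncomputable def mu {E : Type*} [NormedAddCommGroup E] [NormedSpace ℝ E]
    (r : ℤ) (l : ℕ) (f : E → ℂ) : ENNReal :=
  ⨆ (x : E) (i : ℕ) (_ : i ≤ l),
    ENNReal.ofReal ((1 + ‖x‖) ^ r * ‖iteratedFDeriv ℝ i f x‖)

def IsOEps (g : ℝ → ENNReal) (h : ℝ → ℝ) : Prop :=
  ∃ C > (0:ℝ), ∃ η > (0:ℝ), ∀ ε : ℝ, 0 < ε → ε ≤ η → g ε ≤ ENNReal.ofReal (C * h ε)

def SchwartzLike {E : Type*} [NormedAddCommGroup E] [NormedSpace ℝ E] (f : E → ℂ) : Prop :=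
  ContDiff ℝ (⊤ : ℕ∞) f ∧ ∀ q l : ℕ, mu (q : ℤ) l f < ⊤

def TemperateGrowth' {E : Type*} [NormedAddCommGroup E] [NormedSpace ℝ E] (f : E → ℂ) : Prop :=
  ContDiff ℝ (⊤ : ℕ∞) f ∧ ∀ l : ℕ, ∃ q : ℕ, mu (-(q:ℤ)) l f < ⊤

def IsESNet {E : Type*} [NormedAddCommGroup E] [NormedSpace ℝ E] (f : ℝ → E → ℂ) : Prop :=
  (∀ ε ∈ Set.Ioc (0:ℝ) 1, SchwartzLike (f ε)) ∧
  ∀ q l : ℕ, ∃ N : ℕ, IsOEps (fun ε => mu (q:ℤ) l (f ε)) (fun ε => ε ^ (-(N:ℤ)))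

def IsNSNet {E : Type*} [NormedAddCommGroup E] [NormedSpace ℝ E] (f : ℝ → E → ℂ) : Prop :=
  (∀ ε ∈ Set.Ioc (0:ℝ) 1, SchwartzLike (f ε)) ∧
  ∀ q l p : ℕ, IsOEps (fun ε => mu (q:ℤ) l (f ε)) (fun ε => ε ^ p)

def IsEtauNet {E : Type*} [NormedAddCommGroup E] [NormedSpace ℝ E] (f : ℝ → E → ℂ) : Prop :=
  (∀ ε ∈ Set.Ioc (0:ℝ) 1, TemperateGrowth' (f ε)) ∧
  ∀ l : ℕ, ∃ q N : ℕ, IsOEps (fun ε => mu (-(q:ℤ)) l (f ε)) (fun ε => ε ^ (-(N:ℤ)))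

def IsNtauNet {E : Type*} [NormedAddCommGroup E] [NormedSpace ℝ E] (f : ℝ → E → ℂ) : Prop :=
  (∀ ε ∈ Set.Ioc (0:ℝ) 1, TemperateGrowth' (f ε)) ∧
  ∀ l : ℕ, ∃ q : ℕ, ∀ p : ℕ, IsOEps (fun ε => mu (-(q:ℤ)) l (f ε)) (fun ε => ε ^ p)

noncomputable def scaled {d : ℕ} (ρ : (Fin d → ℝ) → ℂ) (t : ℝ) (x : Fin d → ℝ) : ℂ :=
  ((t ^ (-(d:ℤ)) : ℝ) : ℂ) * ρ (t⁻¹ • x)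

def IsMollifier {d : ℕ} (ρ : SchwartzMap (Fin d → ℝ) ℂ) : Prop :=
  (∫ x : Fin d → ℝ, ρ x) = 1 ∧
  ∀ α : Fin d → ℕ, α ≠ 0 → (∫ x : Fin d → ℝ, (∏ j, (x j : ℂ) ^ (α j)) * ρ x) = 0

def MemLa (a : ℝ) (N : ℕ → ℝ) : Prop :=
  (∀ l, 0 ≤ N l) ∧
  ((a = 0 ∧ Filter.Tendsto (fun l : ℕ => N l / (l:ℝ)) Filter.atTop (nhds 0)) ∨
   (0 < a ∧ Filter.limsup (fun l : ℕ => N l / (l:ℝ)) Filter.atTop < a))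

def IsESLNet {E : Type*} [NormedAddCommGroup E] [NormedSpace ℝ E]
    (a : ℝ) (f : ℝ → E → ℂ) : Prop :=
  (∀ ε ∈ Set.Ioc (0:ℝ) 1, SchwartzLike (f ε)) ∧
  ∃ N : ℕ → ℝ, MemLa a N ∧
    ∀ q l : ℕ, IsOEps (fun ε => mu (q:ℤ) l (f ε)) (fun ε => ε ^ (-(N l)))

def IsEtauLNet {E : Type*} [NormedAddCommGroup E] [NormedSpace ℝ E]
    (c : ℝ) (f : ℝ → E → ℂ) : Prop :=
  (∀ ε ∈ Set.Ioc (0:ℝ) 1, TemperateGrowth' (f ε)) ∧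
  ∃ N : ℕ → ℝ, MemLa c N ∧ ∃ q : ℕ, ∀ l : ℕ,
    IsOEps (fun ε => mu (-(q:ℤ)) l (f ε)) (fun ε => ε ^ (-(N l)))

def IsESinfNet {E : Type*} [NormedAddCommGroup E] [NormedSpace ℝ E] (f : ℝ → E → ℂ) : Prop :=
  (∀ ε ∈ Set.Ioc (0:ℝ) 1, SchwartzLike (f ε)) ∧
  ∃ N : ℕ, ∀ q l : ℕ, IsOEps (fun ε => mu (q:ℤ) l (f ε)) (fun ε => ε ^ (-(N:ℤ)))

def ModerateNetMaps (m n : ℕ)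
    (L : ℝ → SchwartzMap (Fin n → ℝ) ℂ → ((Fin m → ℝ) → ℂ)) : Prop :=
  (∀ ε ∈ Set.Ioc (0:ℝ) 1, ∀ f, TemperateGrowth' (L ε f)) ∧
  ∀ l : ℕ, ∃ C : ℝ → ℝ, (∀ ε, 0 ≤ C ε) ∧
    (∃ N : ℕ, ∃ C₀ > (0:ℝ), ∃ η > (0:ℝ), ∀ ε : ℝ, 0 < ε → ε ≤ η → C ε ≤ C₀ * ε ^ (-(N:ℤ))) ∧
    ∃ p q l' : ℕ, ∃ η > (0:ℝ), ∀ ε : ℝ, 0 < ε → ε ≤ η →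
      ∀ f : SchwartzMap (Fin n → ℝ) ℂ,
        mu (-(p:ℤ)) l (L ε f) ≤ ENNReal.ofReal (C ε) * mu (q:ℤ) l' ⇑f

def NegligibleNetMaps (m n : ℕ)
    (L : ℝ → SchwartzMap (Fin n → ℝ) ℂ → ((Fin m → ℝ) → ℂ)) : Prop :=
  (∀ ε ∈ Set.Ioc (0:ℝ) 1, ∀ f, TemperateGrowth' (L ε f)) ∧
  ∀ l : ℕ, ∃ C : ℝ → ℝ, (∀ ε, 0 ≤ C ε) ∧
    (∀ p' : ℕ, ∃ C₀ > (0:ℝ), ∃ η > (0:ℝ), ∀ ε : ℝ, 0 < ε → ε ≤ η → C ε ≤ C₀ * ε ^ p') ∧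
    ∃ p q l' : ℕ, ∃ η > (0:ℝ), ∀ ε : ℝ, 0 < ε → ε ≤ η →
      ∀ f : SchwartzMap (Fin n → ℝ) ℂ,
        mu (-(p:ℤ)) l (L ε f) ≤ ENNReal.ofReal (C ε) * mu (q:ℤ) l' ⇑f

def StronglyModerateWith (m n : ℕ)
    (L : ℝ → SchwartzMap (Fin n → ℝ) ℂ → ((Fin m → ℝ) → ℂ))
    (lam : ℕ → ℕ) (r : ℕ → ℝ) : Prop :=
  (∀ ε ∈ Set.Ioc (0:ℝ) 1, ∀ f, TemperateGrowth' (L ε f)) ∧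
  (∀ l, 0 ≤ r l) ∧
  ∀ l : ℕ, ∃ C ≥ (0:ℝ), ∃ p q : ℕ, ∃ η > (0:ℝ), ∀ ε : ℝ, 0 < ε → ε ≤ η →
    ∀ f : SchwartzMap (Fin n → ℝ) ℂ,
      mu (-(p:ℤ)) l (L ε f) ≤ ENNReal.ofReal (C * ε ^ (-(r l))) * mu (q:ℤ) (lam l) ⇑f

def ContinuousIntoOM (m n : ℕ) (L : SchwartzMap (Fin n → ℝ) ℂ → ((Fin m → ℝ) → ℂ)) : Prop :=
  ∀ l : ℕ, ∃ C ≥ (0:ℝ), ∃ p q l' : ℕ, ∀ f,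
    mu (-(p:ℤ)) l (L f) ≤ ENNReal.ofReal C * mu (q:ℤ) l' ⇑f

noncomputable def muOn {d : ℕ} (Ω : Set (Fin d → ℝ)) (r : ℤ) (l : ℕ)
    (f : (Fin d → ℝ) → ℂ) : ENNReal :=
  ⨆ (x : Ω) (i : ℕ) (_ : i ≤ l),
    ENNReal.ofReal ((1 + ‖(x : Fin d → ℝ)‖) ^ r * ‖iteratedFDerivWithin ℝ i f Ω (x : Fin d → ℝ)‖)

def IsBox {d : ℕ} (Ω : Set (Fin d → ℝ)) : Prop :=
  ∃ I : Fin d → Set ℝ, (∀ j, IsOpen (I j) ∧ Convex ℝ (I j)) ∧ Ω = Set.univ.pi I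

def IsRegularSet (R : Set (ℕ → ℝ)) : Prop :=
  R.Nonempty ∧ (∀ N ∈ R, ∀ n, 0 ≤ N n) ∧
  (∀ N ∈ R, ∀ k : ℕ, ∃ N' ∈ R, ∀ n, N n + k ≤ N' n) ∧
  (∀ N₁ ∈ R, ∀ N₂ ∈ R, ∃ N ∈ R, ∀ n, max (N₁ n) (N₂ n) ≤ N n) ∧
  (∀ N₁ ∈ R, ∀ N₂ ∈ R, ∃ N ∈ R, ∀ l₁ l₂ : ℕ, N₁ l₁ + N₂ l₂ ≤ N (l₁ + l₂))

def IsESRNet {E : Type*} [NormedAddCommGroup E] [NormedSpace ℝ E]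
    (R : Set (ℕ → ℝ)) (f : ℝ → E → ℂ) : Prop :=
  (∀ ε ∈ Set.Ioc (0:ℝ) 1, SchwartzLike (f ε)) ∧
  ∃ N ∈ R, ∀ q l : ℕ, IsOEps (fun ε => mu (q:ℤ) l (f ε)) (fun ε => ε ^ (-(N l)))

def IsEtauRNet {E : Type*} [NormedAddCommGroup E] [NormedSpace ℝ E]
    (R : Set (ℕ → ℝ)) (f : ℝ → E → ℂ) : Prop :=
  (∀ ε ∈ Set.Ioc (0:ℝ) 1, TemperateGrowth' (f ε)) ∧
  ∃ N ∈ R, ∃ q : ℕ, ∀ l : ℕ,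
    IsOEps (fun ε => mu (-(q:ℤ)) l (f ε)) (fun ε => ε ^ (-(N l)))

noncomputable def pderiv' {d : ℕ} (j : Fin d) (f : (Fin d → ℝ) → ℂ) : (Fin d → ℝ) → ℂ :=
  fun x => fderiv ℝ f x (Pi.single j 1)

noncomputable def multiDeriv {d : ℕ} : List (Fin d) → ((Fin d → ℝ) → ℂ) → ((Fin d → ℝ) → ℂ)
  | [], f => f
  | j :: js, f => pderiv' j (multiDeriv js f)

/-!
Substituting `y = ε z`, the regularization is `∫ ρ(z) f (x - ε z) dz`. Since all moments of `ρ` of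
positive order vanish, `ρ` integrates the Taylor polynomial of `z ↦ f (x - ε z)` at `0` to its
constant term `f x`, whatever its degree `n`; what is left of the difference is the integrated
Taylor remainder, which is `O(ε ^ (n + 1))` because `ρ` has finite moments. Its growth in `x` is
that of the derivative of order `n + 1` of `f`, so that a single weight `(1 + |x|) ^ q` serves all
`n` exactly because `f` lies in `O_C`. Regularization commutes with differentiation, hence the same
estimate applied to the derivatives of `f` bounds the derivatives of the difference.
-/

open scoped ContDiff Nat

section Growth

variable {E G : Type*} [NormedAddCommGroup E] [NormedSpace ℝ E] [NormedAddCommGroup G]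

theorem one_add_norm_sub_smul_le (x z : E) (ε : ℝ) :
    1 + ‖x - ε • z‖ ≤ (1 + |ε|) * (1 + ‖x‖) * (1 + ‖z‖) := by
  have htri : ‖x - ε • z‖ ≤ ‖x‖ + |ε| * ‖z‖ := by
    simpa only [norm_smul, Real.norm_eq_abs] using norm_sub_le x (ε • z)
  have : 0 ≤ |ε| + ‖z‖ + |ε| * ‖x‖ + ‖x‖ * ‖z‖ + |ε| * ‖x‖ * ‖z‖ := by positivity
  linarith

theorem norm_comp_sub_smul_le {q : ℕ} {g : E → G} {C : ℝ} (hC : 0 ≤ C)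
    (hg : ∀ x, ‖g x‖ ≤ C * (1 + ‖x‖) ^ q) (ε : ℝ) (x z : E) :
    ‖g (x - ε • z)‖ ≤ C * (1 + |ε|) ^ q * (1 + ‖x‖) ^ q * (1 + ‖z‖) ^ q :=
  calc ‖g (x - ε • z)‖ ≤ C * ((1 + |ε|) * (1 + ‖x‖) * (1 + ‖z‖)) ^ q :=
        (hg _).trans (by gcongr; exact one_add_norm_sub_smul_le x z ε)
    _ = C * (1 + |ε|) ^ q * (1 + ‖x‖) ^ q * (1 + ‖z‖) ^ q := by rw [mul_pow, mul_pow]; ring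

variable [NormedSpace ℝ G]

/-- `g` belongs to the space `O_C` with growth exponent `q`: it is smooth and each of its
derivatives is bounded by a multiple of `(1 + ‖x‖) ^ q`. In contrast to
`Function.HasTemperateGrowth`, the exponent does not depend on the order of the derivative. -/
structure HasUniformTemperateGrowth (q : ℕ) (g : E → G) : Prop where
  contDiff : ContDiff ℝ ∞ g
  exists_norm_iteratedFDeriv_le :
    ∀ k : ℕ, ∃ C, 0 ≤ C ∧ ∀ x, ‖iteratedFDeriv ℝ k g x‖ ≤ C * (1 + ‖x‖) ^ q

namespace HasUniformTemperateGrowth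

variable {q : ℕ} {g : E → G}

theorem exists_norm_le (hg : HasUniformTemperateGrowth q g) :
    ∃ C, 0 ≤ C ∧ ∀ x, ‖g x‖ ≤ C * (1 + ‖x‖) ^ q := by
  simpa only [norm_iteratedFDeriv_zero] using hg.exists_norm_iteratedFDeriv_le 0

protected theorem fderiv (hg : HasUniformTemperateGrowth q g) :
    HasUniformTemperateGrowth q (fderiv ℝ g) where
  contDiff := hg.contDiff.fderiv_right (by simp)
  exists_norm_iteratedFDeriv_le k := by
    simpa only [norm_iteratedFDeriv_fderiv] using hg.exists_norm_iteratedFDeriv_le (k + 1)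

theorem linearIsometryEquiv_comp {F : Type*} [NormedAddCommGroup F] [NormedSpace ℝ F]
    (hg : HasUniformTemperateGrowth q g) (L : G ≃ₗᵢ[ℝ] F) :
    HasUniformTemperateGrowth q (L ∘ g) where
  contDiff := L.contDiff.comp hg.contDiff
  exists_norm_iteratedFDeriv_le k := by
    simpa only [L.norm_iteratedFDeriv_comp_left] using hg.exists_norm_iteratedFDeriv_le k

protected theorem iteratedFDeriv (hg : HasUniformTemperateGrowth q g) (i : ℕ) :
    HasUniformTemperateGrowth q (iteratedFDeriv ℝ i g) := by
  induction i with
  | zero =>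
    rw [iteratedFDeriv_zero_eq_comp]
    exact hg.linearIsometryEquiv_comp _
  | succ i ih =>
    rw [iteratedFDeriv_succ_eq_comp_left]
    exact ih.fderiv.linearIsometryEquiv_comp _

end HasUniformTemperateGrowth

end Growth

section Taylor

variable {E G : Type*} [NormedAddCommGroup E] [NormedSpace ℝ E]
  [NormedAddCommGroup G] [NormedSpace ℝ G]

/-- The Taylor series of `g` at `x`. Unlike Mathlib's `ftaylorSeries`, it includes the factors
`1 / k!`, so that its partial sums are the Taylor polynomials. -/
noncomputable def normalizedTaylorSeries (g : E → G) (x : E) : FormalMultilinearSeries ℝ E G :=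
  fun k => (k ! : ℝ)⁻¹ • iteratedFDeriv ℝ k g x

theorem normalizedTaylorSeries_zero_apply (g : E → G) (x : E) (v : Fin 0 → E) :
    normalizedTaylorSeries g x 0 v = g x := by
  simp [normalizedTaylorSeries]

theorem norm_sub_taylor_le [CompleteSpace G] {g : E → G} {n : ℕ} (hg : ContDiff ℝ (n + 1) g)
    (x v : E) {B : ℝ} (hB : ∀ t ∈ Set.Icc (0 : ℝ) 1, ‖iteratedFDeriv ℝ (n + 1) g (x + t • v)‖ ≤ B) :
    ‖g (x + v) - (normalizedTaylorSeries g x).partialSum (n + 1) v‖ ≤ B * ‖v‖ ^ (n + 1) := by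
  have hintegrand : ∀ t ∈ Set.uIoc (0 : ℝ) 1,
      ‖(1 - t) ^ n • iteratedFDeriv ℝ (n + 1) g (x + t • v) fun _ => v‖ ≤ B * ‖v‖ ^ (n + 1) := by
    intro t ht
    rw [Set.uIoc_of_le zero_le_one] at ht
    have hweight : |1 - t| ^ n ≤ 1 :=
      pow_le_one₀ (abs_nonneg _) (abs_le.2 ⟨by linarith [ht.2], by linarith [ht.1]⟩)
    rw [norm_smul, norm_pow, Real.norm_eq_abs]
    calc |1 - t| ^ n * ‖iteratedFDeriv ℝ (n + 1) g (x + t • v) fun _ => v‖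
        ≤ ‖iteratedFDeriv ℝ (n + 1) g (x + t • v) fun _ => v‖ :=
          mul_le_of_le_one_left (norm_nonneg _) hweight
      _ ≤ B * ‖v‖ ^ (n + 1) := by
          simpa using ContinuousMultilinearMap.le_of_opNorm_le (hB t ⟨ht.1.le, ht.2⟩) fun _ => v
  have hintegral : ‖∫ t in (0 : ℝ)..1,
      (1 - t) ^ n • iteratedFDeriv ℝ (n + 1) g (x + t • v) fun _ => v‖ ≤ B * ‖v‖ ^ (n + 1) := by
    simpa using intervalIntegral.norm_integral_le_of_norm_le_const hintegrand
  have htaylor : g (x + v) - (normalizedTaylorSeries g x).partialSum (n + 1) v =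
      (n ! : ℝ)⁻¹ • ∫ t in (0 : ℝ)..1,
        (1 - t) ^ n • iteratedFDeriv ℝ (n + 1) g (x + t • v) fun _ => v :=
    sub_eq_of_eq_add' (map_add_eq_sum_add_integral_iteratedFDeriv fun _ _ => hg.contDiffAt)
  rw [htaylor, norm_smul]
  refine (mul_le_of_le_one_left (norm_nonneg _) ?_).trans hintegral
  rw [norm_inv, Real.norm_natCast]
  exact inv_le_one_of_one_le₀ (mod_cast n.factorial_pos)

theorem HasUniformTemperateGrowth.exists_norm_sub_taylor_le [CompleteSpace G] {q : ℕ} {g : E → G}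
    (hg : HasUniformTemperateGrowth q g) (n : ℕ) :
    ∃ C, 0 ≤ C ∧ ∀ (ε : ℝ) (x z : E),
      ‖g (x - ε • z) - (normalizedTaylorSeries g x).partialSum (n + 1) (-ε • z)‖ ≤
        C * ((1 + |ε|) ^ q * |ε| ^ (n + 1)) * (1 + ‖x‖) ^ q * (1 + ‖z‖) ^ (q + (n + 1)) := by
  obtain ⟨C, hC, hbound⟩ := hg.exists_norm_iteratedFDeriv_le (n + 1)
  refine ⟨C, hC, fun ε x z => ?_⟩
  have hsegment : ∀ t ∈ Set.Icc (0 : ℝ) 1, ‖iteratedFDeriv ℝ (n + 1) g (x + t • -ε • z)‖ ≤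
      C * (1 + |ε|) ^ q * (1 + ‖x‖) ^ q * (1 + ‖z‖) ^ q := by
    intro t ht
    have htε : |t * ε| ≤ |ε| := by
      rw [abs_mul, abs_of_nonneg ht.1]
      exact mul_le_of_le_one_left (abs_nonneg _) ht.2
    rw [show x + t • -ε • z = x - (t * ε) • z by module]
    exact (norm_comp_sub_smul_le hC hbound (t * ε) x z).trans (by gcongr)
  have hremainder :=
    norm_sub_taylor_le (hg.contDiff.of_le (by exact_mod_cast le_top)) x (-ε • z) hsegment
  rw [neg_smul, ← sub_eq_add_neg, norm_neg, norm_smul, Real.norm_eq_abs, ← neg_smul] at hremainder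
  calc ‖g (x - ε • z) - (normalizedTaylorSeries g x).partialSum (n + 1) (-ε • z)‖
      ≤ C * (1 + |ε|) ^ q * (1 + ‖x‖) ^ q * (1 + ‖z‖) ^ q * (|ε| * ‖z‖) ^ (n + 1) := hremainder
    _ ≤ C * (1 + |ε|) ^ q * (1 + ‖x‖) ^ q * (1 + ‖z‖) ^ q * (|ε| * (1 + ‖z‖)) ^ (n + 1) := by
      gcongr
      linarith
    _ = _ := by rw [mul_pow |ε|]; ring

end Taylor

section Moments

variable {E G 𝕜 : Type*} [NormedAddCommGroup E] [RCLike 𝕜] [NormedAddCommGroup G] [NormedSpace 𝕜 G]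

theorem norm_smul_le_of_norm_le_one_add_norm_pow (ρ : E → 𝕜) {u : E → G} {C : ℝ} {n : ℕ}
    (hbound : ∀ z, ‖u z‖ ≤ C * (1 + ‖z‖) ^ n) (z : E) :
    ‖ρ z • u z‖ ≤ C * ((1 + ‖z‖) ^ n * ‖ρ z‖) := by
  rw [norm_smul, mul_comm, ← mul_assoc]
  gcongr
  exact hbound z

variable [MeasurableSpace E]

/-- All absolute moments of `ρ` are finite. -/
def HasFiniteMoments (ρ : E → 𝕜) (μ : Measure E) : Prop :=
  ∀ n : ℕ, Integrable (fun z => (‖z‖ ^ n : ℝ) • ρ z) μ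

theorem hasFiniteMoments_schwartzMap [NormedSpace ℝ E] [BorelSpace E] [SecondCountableTopology E]
    {μ : Measure E} [μ.HasTemperateGrowth] (ρ : SchwartzMap E 𝕜) : HasFiniteMoments ρ μ :=
  fun n => (ρ.integrable_pow_mul μ n).mono (Continuous.aestronglyMeasurable (by fun_prop))
    (Eventually.of_forall fun z => by simp [norm_smul])

namespace HasFiniteMoments

variable {ρ : E → 𝕜} {μ : Measure E}

theorem aestronglyMeasurable (hρ : HasFiniteMoments ρ μ) : AEStronglyMeasurable ρ μ := by
  simpa using (hρ 0).aestronglyMeasurable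

theorem integrable_one_add_norm_pow_mul_norm (hρ : HasFiniteMoments ρ μ) (n : ℕ) :
    Integrable (fun z => (1 + ‖z‖) ^ n * ‖ρ z‖) μ := by
  have hbinomial : ∀ z, (1 + ‖z‖) ^ n * ‖ρ z‖ =
      ∑ k ∈ Finset.range (n + 1), (n.choose k : ℝ) * ‖(‖z‖ ^ k : ℝ) • ρ z‖ := by
    intro z
    rw [add_comm, add_pow, Finset.sum_mul]
    refine Finset.sum_congr rfl fun k _ => ?_
    rw [norm_smul, norm_pow, norm_norm, one_pow]
    ring
  simp_rw [hbinomial]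
  exact integrable_finsetSum _ fun k _ => (hρ k).norm.const_mul _

theorem integrable_smul (hρ : HasFiniteMoments ρ μ) {u : E → G} {C : ℝ} {n : ℕ}
    (hu : AEStronglyMeasurable u μ) (hbound : ∀ z, ‖u z‖ ≤ C * (1 + ‖z‖) ^ n) :
    Integrable (fun z => ρ z • u z) μ :=
  ((hρ.integrable_one_add_norm_pow_mul_norm n).const_mul C).mono'
    (hρ.aestronglyMeasurable.smul hu)
    (Eventually.of_forall (norm_smul_le_of_norm_le_one_add_norm_pow ρ hbound))

theorem norm_integral_smul_le [NormedSpace ℝ G] (hρ : HasFiniteMoments ρ μ) {u : E → G} {C : ℝ}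
    {n : ℕ} (hbound : ∀ z, ‖u z‖ ≤ C * (1 + ‖z‖) ^ n) :
    ‖∫ z, ρ z • u z ∂μ‖ ≤ C * ∫ z, (1 + ‖z‖) ^ n * ‖ρ z‖ ∂μ := by
  rw [← integral_const_mul]
  exact norm_integral_le_of_norm_le ((hρ.integrable_one_add_norm_pow_mul_norm n).const_mul C)
    (Eventually.of_forall (norm_smul_le_of_norm_le_one_add_norm_pow ρ hbound))

theorem integrable_smul_multilinear_diag [NormedSpace ℝ E] [BorelSpace E]
    [SecondCountableTopology E] [NormedSpace ℝ G] (hρ : HasFiniteMoments ρ μ) {k : ℕ}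
    (M : E [×k]→L[ℝ] G) : Integrable (fun z => ρ z • M fun _ => z) μ := by
  refine hρ.integrable_smul (C := ‖M‖) (n := k)
    (Continuous.aestronglyMeasurable (by fun_prop)) fun z => ?_
  calc ‖M fun _ => z‖ ≤ ‖M‖ * ‖z‖ ^ k := by simpa using M.le_opNorm fun _ => z
    _ ≤ ‖M‖ * (1 + ‖z‖) ^ k := by gcongr; linarith

theorem integrable_smul_partialSum [NormedSpace ℝ E] [BorelSpace E] [SecondCountableTopology E]
    [NormedSpace ℝ G] (hρ : HasFiniteMoments ρ μ) (p : FormalMultilinearSeries ℝ E G) (n : ℕ) :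
    Integrable (fun z => ρ z • p.partialSum n z) μ := by
  simp_rw [FormalMultilinearSeries.partialSum, Finset.smul_sum]
  exact integrable_finsetSum _ fun k _ => hρ.integrable_smul_multilinear_diag (p k)

end HasFiniteMoments

end Moments

section InfiniteOrderKernel

variable {E G 𝕜 : Type*} [NormedAddCommGroup E] [NormedSpace ℝ E] [MeasurableSpace E] [RCLike 𝕜]
  [NormedAddCommGroup G] [NormedSpace 𝕜 G] [NormedSpace ℝ G]

/-- `ρ` is an averaging kernel of infinite order: it has integral `1` and vanishing moments of all
positive orders. Moments are taken against diagonals of multilinear forms instead of monomials, so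
that no coordinates on `E` are needed. -/
structure IsInfiniteOrderKernel (ρ : E → 𝕜) (μ : Measure E) : Prop where
  hasFiniteMoments : HasFiniteMoments ρ μ
  integral_eq_one : ∫ z, ρ z ∂μ = 1
  integral_mul_multilinear_diag :
    ∀ ⦃k : ℕ⦄, k ≠ 0 → ∀ M : E [×k]→L[ℝ] 𝕜, ∫ z, ρ z * M (fun _ => z) ∂μ = 0

theorem multilinear_diag_eq_sum {ι : Type*} [Fintype ι] [DecidableEq ι] {k : ℕ}
    (M : (ι → ℝ) [×k]→L[ℝ] G) (z : ι → ℝ) :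
    M (fun _ => z) = ∑ r : Fin k → ι, (∏ i, z (r i)) • M fun i => Pi.single (r i) 1 := by
  conv_lhs => rw [pi_eq_sum_univ' z]
  rw [M.map_sum]
  exact Finset.sum_congr rfl fun r _ => M.map_smul_univ _ _

theorem HasFiniteMoments.integrable_prod_coord_mul {ι : Type*} [Fintype ι] {ρ : (ι → ℝ) → 𝕜}
    {μ : Measure (ι → ℝ)} (hρ : HasFiniteMoments ρ μ) {k : ℕ} (r : Fin k → ι) :
    Integrable (fun z => (∏ i, (z (r i) : 𝕜)) * ρ z) μ := by
  have h := hρ.integrable_smul_multilinear_diag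
    ((ContinuousMultilinearMap.mkPiAlgebra ℝ (Fin k) 𝕜).compContinuousLinearMap
      fun i => RCLike.ofRealCLM ∘L ContinuousLinearMap.proj (r i))
  simpa [mul_comm] using h

theorem isInfiniteOrderKernel_of_integral_monomial_eq_zero {ι : Type*} [Fintype ι]
    {ρ : (ι → ℝ) → 𝕜} {μ : Measure (ι → ℝ)} (hρ : HasFiniteMoments ρ μ) (hone : ∫ z, ρ z ∂μ = 1)
    (hzero : ∀ α : ι → ℕ, α ≠ 0 → ∫ z, (∏ j, (z j : 𝕜) ^ α j) * ρ z ∂μ = 0) :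
    IsInfiniteOrderKernel ρ μ := by
  classical
  refine ⟨hρ, hone, fun k hk M => ?_⟩
  have hmonomial (r : Fin k → ι) : ∫ z, (∏ i, (z (r i) : 𝕜)) * ρ z ∂μ = 0 := by
    have hne : (fun j => (Finset.univ.filter fun i => r i = j).card) ≠ 0 := by
      refine Function.ne_iff.2
        ⟨r ⟨0, Nat.pos_of_ne_zero hk⟩, Finset.card_ne_zero.2 ⟨⟨0, Nat.pos_of_ne_zero hk⟩, ?_⟩⟩
      exact Finset.mem_filter.2 ⟨Finset.mem_univ _, rfl⟩
    have hfiber (z : ι → ℝ) : ∏ j, (z j : 𝕜) ^ (Finset.univ.filter fun i => r i = j).card =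
        ∏ i, (z (r i) : 𝕜) := by
      simp_rw [← Finset.prod_const]
      exact Finset.prod_fiberwise' Finset.univ r fun j => (z j : 𝕜)
    simpa only [hfiber] using hzero _ hne
  have hexpand (z : ι → ℝ) : ρ z * M (fun _ => z) =
      ∑ r : Fin k → ι, ((∏ i, (z (r i) : 𝕜)) * ρ z) * M fun i => Pi.single (r i) 1 := by
    rw [multilinear_diag_eq_sum, Finset.mul_sum]
    refine Finset.sum_congr rfl fun r _ => ?_
    rw [RCLike.real_smul_eq_coe_mul, RCLike.ofReal_prod]
    ring
  simp_rw [hexpand]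
  rw [integral_finsetSum _ fun r _ => (hρ.integrable_prod_coord_mul r).mul_const _]
  simp_rw [integral_mul_const, hmonomial, zero_mul, Finset.sum_const_zero]

theorem IsMollifier.isInfiniteOrderKernel {d : ℕ} {ρ : SchwartzMap (Fin d → ℝ) ℂ}
    (hρ : IsMollifier ρ) : IsInfiniteOrderKernel ρ volume :=
  isInfiniteOrderKernel_of_integral_monomial_eq_zero (hasFiniteMoments_schwartzMap ρ) hρ.1 hρ.2

namespace IsInfiniteOrderKernel

variable [BorelSpace E] [SecondCountableTopology E] [IsScalarTower ℝ 𝕜 G] [CompleteSpace G]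
  {ρ : E → 𝕜} {μ : Measure E}

theorem integral_smul_multilinear_diag (hρ : IsInfiniteOrderKernel ρ μ) {k : ℕ} (hk : k ≠ 0)
    (M : E [×k]→L[ℝ] G) : ∫ z, ρ z • M (fun _ => z) ∂μ = 0 := by
  refine SeparatingDual.eq_zero_of_forall_dual_eq_zero (R := 𝕜) fun L => ?_
  rw [← L.integral_comp_comm (hρ.hasFiniteMoments.integrable_smul_multilinear_diag M)]
  simpa using hρ.integral_mul_multilinear_diag hk
    ((L.restrictScalars ℝ).compContinuousMultilinearMap M)

theorem integral_smul_partialSum_succ (hρ : IsInfiniteOrderKernel ρ μ)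
    (p : FormalMultilinearSeries ℝ E G) (n : ℕ) :
    ∫ z, ρ z • p.partialSum (n + 1) z ∂μ = p 0 0 := by
  simp_rw [FormalMultilinearSeries.partialSum, Finset.smul_sum]
  rw [integral_finsetSum _ fun k _ =>
      hρ.hasFiniteMoments.integrable_smul_multilinear_diag (p k),
    Finset.sum_eq_single_of_mem 0 (by simp) fun k _ hk => hρ.integral_smul_multilinear_diag hk _]
  have hconst (z : E) : p 0 (fun _ => z) = p 0 0 := congrArg _ (Subsingleton.elim _ _)
  simp_rw [hconst]
  rw [integral_smul_const, hρ.integral_eq_one, one_smul]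

end IsInfiniteOrderKernel

end InfiniteOrderKernel

section Regularization

variable {E G 𝕜 : Type*} [NormedAddCommGroup E] [NormedSpace ℝ E] [MeasurableSpace E] [RCLike 𝕜]
  [NormedAddCommGroup G] [NormedSpace 𝕜 G] [NormedSpace ℝ G]

/-- The regularization of `g` by `ρ` at scale `ε`. It is the convolution of `g` with the rescaled
kernel `ρ_ε` after the substitution `y = ε • z`, a form that makes sense for every measure `μ` and
every real `ε`. -/
noncomputable def regularization (ρ : E → 𝕜) (μ : Measure E) (ε : ℝ) (g : E → G) (x : E) : G :=
  ∫ z, ρ z • g (x - ε • z) ∂μ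

namespace HasUniformTemperateGrowth

variable [BorelSpace E] [SecondCountableTopology E] {ρ : E → 𝕜} {μ : Measure E} {q : ℕ} {g : E → G}

theorem integrable_smul_comp_sub_smul (hg : HasUniformTemperateGrowth q g)
    (hρ : HasFiniteMoments ρ μ) (ε : ℝ) (x : E) : Integrable (fun z => ρ z • g (x - ε • z)) μ := by
  obtain ⟨C, hC, hbound⟩ := hg.exists_norm_le
  have hcont : Continuous g := hg.contDiff.continuous
  exact hρ.integrable_smul (Continuous.aestronglyMeasurable (by fun_prop))
    (norm_comp_sub_smul_le hC hbound ε x)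

variable [IsScalarTower ℝ 𝕜 G]

theorem hasFDerivAt_regularization (hg : HasUniformTemperateGrowth q g)
    (hρ : HasFiniteMoments ρ μ) (ε : ℝ) (x : E) :
    HasFDerivAt (regularization ρ μ ε g) (regularization ρ μ ε (fderiv ℝ g) x) x := by
  obtain ⟨C, hC, hbound⟩ := hg.fderiv.exists_norm_le
  have hdominated (y : E) (hy : y ∈ Metric.ball x 1) (z : E) :
      ‖_root_.fderiv ℝ g (y - ε • z)‖ ≤
        C * (1 + |ε|) ^ q * (1 + (1 + ‖x‖)) ^ q * (1 + ‖z‖) ^ q := by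
    refine (norm_comp_sub_smul_le hC hbound ε y z).trans ?_
    gcongr
    linarith [norm_le_norm_add_norm_sub' y x, mem_ball_iff_norm.1 hy]
  refine hasFDerivAt_integral_of_dominated_of_fderiv_le (𝕜 := ℝ)
    (F' := fun y z => ρ z • _root_.fderiv ℝ g (y - ε • z)) (Metric.ball_mem_nhds x one_pos)
    (Eventually.of_forall fun y => (hg.integrable_smul_comp_sub_smul hρ ε y).aestronglyMeasurable)
    (hg.integrable_smul_comp_sub_smul hρ ε x)
    (hg.fderiv.integrable_smul_comp_sub_smul hρ ε x).aestronglyMeasurable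
    (Eventually.of_forall fun z y hy =>
      norm_smul_le_of_norm_le_one_add_norm_pow ρ (hdominated y hy) z)
    ((hρ.integrable_one_add_norm_pow_mul_norm q).const_mul _)
    (Eventually.of_forall fun z y _ => ?_)
  have hdiff := (hg.contDiff.differentiable (by simp) (y - ε • z)).hasFDerivAt
  exact (hdiff.comp y ((hasFDerivAt_id y).sub_const (ε • z))).const_smul (ρ z)

variable [CompleteSpace G]

theorem hasFTaylorSeriesUpTo_regularization
    (hg : HasUniformTemperateGrowth q g) (hρ : HasFiniteMoments ρ μ) (ε : ℝ) :
    HasFTaylorSeriesUpTo ∞ (regularization ρ μ ε g)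
      fun x i => regularization ρ μ ε (iteratedFDeriv ℝ i g) x where
  zero_eq x := ContinuousLinearMap.integral_comp_comm
    (continuousMultilinearCurryFin0 ℝ E G).toContinuousLinearEquiv.toContinuousLinearMap
    ((hg.iteratedFDeriv 0).integrable_smul_comp_sub_smul hρ ε x) |>.symm
  fderiv m _ x := by
    let curry : (E [×(m + 1)]→L[ℝ] G) →L[ℝ] E →L[ℝ] E [×m]→L[ℝ] G :=
      (continuousMultilinearCurryLeftEquiv ℝ (fun _ : Fin (m + 1) => E)
        G).toContinuousLinearEquiv.toContinuousLinearMap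
    have hcurry := ContinuousLinearMap.integral_comp_comm (𝕜 := ℝ)
      (Fₗ := E →L[ℝ] E [×m]→L[ℝ] G) curry
      ((hg.iteratedFDeriv (m + 1)).integrable_smul_comp_sub_smul hρ ε x)
    exact ((hg.iteratedFDeriv m).hasFDerivAt_regularization hρ ε x).congr_fderiv hcurry
  cont m _ := continuous_iff_continuousAt.2 fun x =>
    ((hg.iteratedFDeriv m).hasFDerivAt_regularization hρ ε x).continuousAt

theorem contDiff_regularization
    (hg : HasUniformTemperateGrowth q g) (hρ : HasFiniteMoments ρ μ) (ε : ℝ) :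
    ContDiff ℝ ∞ (regularization ρ μ ε g) :=
  (hg.hasFTaylorSeriesUpTo_regularization hρ ε).contDiff

theorem iteratedFDeriv_regularization
    (hg : HasUniformTemperateGrowth q g) (hρ : HasFiniteMoments ρ μ) (ε : ℝ) (i : ℕ) :
    iteratedFDeriv ℝ i (regularization ρ μ ε g) = regularization ρ μ ε (iteratedFDeriv ℝ i g) :=
  funext fun x => ((hg.hasFTaylorSeriesUpTo_regularization hρ ε).eq_iteratedFDeriv
    (by exact_mod_cast le_top) x).symm

theorem regularization_sub_eq
    (hg : HasUniformTemperateGrowth q g) (hρ : IsInfiniteOrderKernel ρ μ) (n : ℕ) (ε : ℝ) (x : E) :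
    regularization ρ μ ε g x - g x = ∫ z, ρ z •
      (g (x - ε • z) - (normalizedTaylorSeries g x).partialSum (n + 1) (-ε • z)) ∂μ := by
  let p := (normalizedTaylorSeries g x).compContinuousLinearMap (-ε • ContinuousLinearMap.id ℝ E)
  have hp (z : E) : (normalizedTaylorSeries g x).partialSum (n + 1) (-ε • z) =
    p.partialSum (n + 1) z := rfl
  have hconst : ∫ z, ρ z • p.partialSum (n + 1) z ∂μ = g x :=
    (hρ.integral_smul_partialSum_succ p n).trans (normalizedTaylorSeries_zero_apply g x _)
  simp_rw [hp, smul_sub]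
  rw [integral_sub (hg.integrable_smul_comp_sub_smul hρ.hasFiniteMoments ε x)
    (hρ.hasFiniteMoments.integrable_smul_partialSum p (n + 1)), hconst, regularization]

theorem exists_norm_regularization_sub_le
    (hg : HasUniformTemperateGrowth q g) (hρ : IsInfiniteOrderKernel ρ μ) (n : ℕ) :
    ∃ C, 0 ≤ C ∧ ∀ (ε : ℝ) (x : E), ‖regularization ρ μ ε g x - g x‖ ≤
      C * ((1 + |ε|) ^ q * |ε| ^ (n + 1)) * (1 + ‖x‖) ^ q := by
  obtain ⟨C, hC, hbound⟩ := hg.exists_norm_sub_taylor_le n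
  refine ⟨C * ∫ z, (1 + ‖z‖) ^ (q + (n + 1)) * ‖ρ z‖ ∂μ, by positivity, fun ε x => ?_⟩
  rw [hg.regularization_sub_eq hρ n]
  exact (hρ.hasFiniteMoments.norm_integral_smul_le (hbound ε x)).trans_eq (by ring)

end HasUniformTemperateGrowth

end Regularization

section Negligible

variable {E : Type*} [NormedAddCommGroup E] [NormedSpace ℝ E]

theorem mu_neg_le_ofReal_iff {q l : ℕ} {f : E → ℂ} {B : ℝ} (hB : 0 ≤ B) :
    mu (-(q : ℤ)) l f ≤ ENNReal.ofReal B ↔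
      ∀ i ≤ l, ∀ x, ‖iteratedFDeriv ℝ i f x‖ ≤ B * (1 + ‖x‖) ^ q := by
  have hweight (x : E) (i : ℕ) : (1 + ‖x‖) ^ (-(q : ℤ)) * ‖iteratedFDeriv ℝ i f x‖ ≤ B ↔
      ‖iteratedFDeriv ℝ i f x‖ ≤ B * (1 + ‖x‖) ^ q := by
    rw [zpow_neg, zpow_natCast, inv_mul_le_iff₀ (by positivity), mul_comm]
  simp only [mu, iSup_le_iff, ENNReal.ofReal_le_ofReal_iff hB, hweight]
  exact ⟨fun h i hi x => h x i hi, fun h x i hi => h i hi x⟩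

theorem hasUniformTemperateGrowth_of_mu_lt_top {q : ℕ} {f : E → ℂ} (hf : ContDiff ℝ ∞ f)
    (hfin : ∀ l : ℕ, mu (-(q : ℤ)) l f < ⊤) : HasUniformTemperateGrowth q f where
  contDiff := hf
  exists_norm_iteratedFDeriv_le k :=
    ⟨(mu (-(q : ℤ)) k f).toReal, ENNReal.toReal_nonneg,
      (mu_neg_le_ofReal_iff ENNReal.toReal_nonneg).1
        (ENNReal.ofReal_toReal (hfin k).ne).ge k le_rfl⟩

theorem IsNtauNet.congr {u v : ℝ → E → ℂ} (hu : IsNtauNet u)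
    (huv : ∀ ε ∈ Set.Ioc (0 : ℝ) 1, u ε = v ε) : IsNtauNet v := by
  refine ⟨fun ε hε => huv ε hε ▸ hu.1 ε hε, fun l => ?_⟩
  obtain ⟨q, hq⟩ := hu.2 l
  refine ⟨q, fun p => ?_⟩
  obtain ⟨C, hC, η, hη, hbound⟩ := hq p
  refine ⟨C, hC, min η 1, lt_min hη one_pos, fun ε hpos hle => ?_⟩
  have hε : ε ∈ Set.Ioc (0 : ℝ) 1 := ⟨hpos, hle.trans (min_le_right _ _)⟩
  simpa only [huv ε hε] using hbound ε hpos (hle.trans (min_le_left _ _))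

variable [MeasurableSpace E] [BorelSpace E] {μ : Measure E} {ρ : E → ℂ} {f : E → ℂ}

theorem HasUniformTemperateGrowth.exists_mu_regularization_sub_le [SecondCountableTopology E]
    {q : ℕ} (hf : HasUniformTemperateGrowth q f) (hρ : IsInfiniteOrderKernel ρ μ) (l n : ℕ) :
    ∃ C, 0 ≤ C ∧ ∀ ε : ℝ, mu (-(q : ℤ)) l (fun x => regularization ρ μ ε f x - f x) ≤
      ENNReal.ofReal (C * ((1 + |ε|) ^ q * |ε| ^ (n + 1))) := by
  choose C hC hbound using fun i =>
    (hf.iteratedFDeriv i).exists_norm_regularization_sub_le hρ n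
  have hsum : 0 ≤ ∑ i ∈ Finset.range (l + 1), C i := Finset.sum_nonneg fun i _ => hC i
  refine ⟨_, hsum, fun ε => (mu_neg_le_ofReal_iff (by positivity)).2 fun i hi x => ?_⟩
  have hsmooth : (i : ℕ∞ω) ≤ ∞ := by exact_mod_cast le_top
  rw [fun_iteratedFDeriv_sub_apply
      ((hf.contDiff_regularization hρ.hasFiniteMoments ε).contDiffAt.of_le hsmooth)
      (hf.contDiff.contDiffAt.of_le hsmooth),
    hf.iteratedFDeriv_regularization hρ.hasFiniteMoments]
  refine (hbound i ε x).trans ?_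
  gcongr
  exact Finset.single_le_sum (fun i _ => hC i) (Finset.mem_range.2 (Nat.lt_succ_of_le hi))

theorem isNtauNet_regularization_sub [SecondCountableTopology E] {q : ℕ}
    (hf : HasUniformTemperateGrowth q f) (hρ : IsInfiniteOrderKernel ρ μ) :
    IsNtauNet (fun ε x => regularization ρ μ ε f x - f x) := by
  refine ⟨fun ε _ => ⟨?_, fun l => ⟨q, ?_⟩⟩, fun l => ⟨q, fun p => ?_⟩⟩
  · exact (hf.contDiff_regularization hρ.hasFiniteMoments ε).sub hf.contDiff
  · obtain ⟨C, -, hbound⟩ := hf.exists_mu_regularization_sub_le hρ l 0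
    exact (hbound ε).trans_lt ENNReal.ofReal_lt_top
  · obtain ⟨C, hC, hbound⟩ := hf.exists_mu_regularization_sub_le hρ l p
    refine ⟨(C + 1) * 2 ^ q, by positivity, 1, one_pos, fun ε hpos hle => (hbound ε).trans ?_⟩
    apply ENNReal.ofReal_le_ofReal
    rw [abs_of_pos hpos, mul_assoc]
    gcongr ?_ * (?_ * ?_)
    · linarith
    · gcongr
      linarith
    · exact pow_le_pow_of_le_one hpos.le hle p.le_succ

theorem integral_comp_sub_mul_rescaled_eq_regularization [FiniteDimensional ℝ E]
    [μ.IsAddHaarMeasure] (ρ f : E → ℂ) {ε : ℝ} (hε : 0 < ε) (x : E) :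
    ∫ y, f (x - y) * (((ε ^ (-(Module.finrank ℝ E : ℤ)) : ℝ) : ℂ) * ρ (ε⁻¹ • y)) ∂μ =
      regularization ρ μ ε f x := by
  have hchange := Measure.integral_comp_inv_smul_of_nonneg μ
    (fun z => ρ z • f (x - ε • z)) hε.le
  simp only [smul_inv_smul₀ hε.ne'] at hchange
  have hintegrand (y : E) :
      f (x - y) * (((ε ^ (-(Module.finrank ℝ E : ℤ)) : ℝ) : ℂ) * ρ (ε⁻¹ • y)) =
        ε ^ (-(Module.finrank ℝ E : ℤ)) • (ρ (ε⁻¹ • y) • f (x - y)) := by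
    rw [Complex.real_smul, smul_eq_mul]
    ring
  simp_rw [hintegrand]
  rw [integral_smul, hchange, smul_smul, zpow_neg, zpow_natCast, inv_mul_cancel₀ (by positivity),
    one_smul, regularization]

end Negligible

theorem stmt3_general {E : Type*} [NormedAddCommGroup E] [NormedSpace ℝ E]
    [FiniteDimensional ℝ E] [MeasurableSpace E] [BorelSpace E] {μ : Measure E}
    [μ.IsAddHaarMeasure] {ρ : E → ℂ} (hρ : IsInfiniteOrderKernel ρ μ) {f : E → ℂ}
    (hf : ContDiff ℝ ∞ f) (hOC : ∃ q : ℕ, ∀ l : ℕ, mu (-(q : ℤ)) l f < ⊤) :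
    IsNtauNet (fun ε x =>
      (∫ y, f (x - y) * (((ε ^ (-(Module.finrank ℝ E : ℤ)) : ℝ) : ℂ) * ρ (ε⁻¹ • y)) ∂μ) - f x) := by
  obtain ⟨q, hfin⟩ := hOC
  have : SecondCountableTopology E := secondCountable_of_proper
  have hnet := isNtauNet_regularization_sub (hasUniformTemperateGrowth_of_mu_lt_top hf hfin) hρ
  refine hnet.congr fun ε hε => funext fun x => ?_
  rw [integral_comp_sub_mul_rescaled_eq_regularization ρ f hε.1]

/-- for `f ∈ O_C(ℝ^d)`, the net `(f ∗ ρ_ε − f)_ε` belongs to `N_τ(ℝ^d)`. -/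
theorem stmt3 (d : ℕ) (hd : 1 ≤ d)
    (ρ : SchwartzMap (Fin d → ℝ) ℂ) (hρ : IsMollifier ρ)
    (f : (Fin d → ℝ) → ℂ) (hf : ContDiff ℝ (⊤ : ℕ∞) f)
    (hOC : ∃ q : ℕ, ∀ l : ℕ, mu (-(q:ℤ)) l f < ⊤) :
    IsNtauNet (fun ε x => (∫ y : Fin d → ℝ, f (x - y) * scaled ⇑ρ ε y) - f x) := by
  simpa only [scaled, Module.finrank_fin_fun] using stmt3_general hρ.isInfiniteOrderKernel hf hOC
end

section
/- Let m, n ≥ 1, let (H_ε)_{ε∈(0,1]} be a net in E_τ(ℝ^{m+n}) and (f_ε)_{ε∈(0,1]} a net in E_S(ℝ^n). Then for each ε ∈ (0,1] and x ∈ ℝ^m the function y ↦ H_ε(x,y) f_ε(y) is integrable on ℝ^n, the function x ↦ ∫_{ℝ^n} H_ε(x,y) f_ε(y) dy is smooth on ℝ^m with temperate growth, and the net (x ↦ ∫_{ℝ^n} H_ε(x,y) f_ε(y) dy)_{ε∈(0,1]} belongs to E_τ(ℝ^m). -/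
open MeasureTheory Filter

/-!
Because `1 + ‖(x, y)‖ ≤ (1 + ‖x‖) (1 + ‖y‖)`, the `x`-derivatives of order at most `l` of
`G (x, y) * g y` are bounded, for every `k`, by
`μ_{-q,l}(G) μ_{q+k,0}(g) (1 + ‖x‖) ^ q (1 + ‖y‖) ^ (-k)`: the decay of `g` pays both for the growth
of `G` in `y` and for an integrable weight. Locally uniformly in `x` this is an integrable bound, so
all derivatives may be taken under the integral sign, and integrating it gives
`μ_{-q,l}(∫ G(·, y) g(y) dy) ≤ μ_{-q,l}(G) μ_{q+k,0}(g) ∫ (1 + ‖y‖) ^ (-k) dy`.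
For nets, the two powers of `ε⁻¹` on the right multiply.
-/

section ParametricIntegral

variable {X E W Y : Type*} [TopologicalSpace X] [NormedAddCommGroup W] [MeasurableSpace Y]
  {ν : Measure Y}

/-- Local domination of a family of functions `φ x : Y → W`: around each parameter, one integrable
function bounds the norms of all members of the family. This is the hypothesis under which limits
and derivatives in the parameter `x` may be taken under the integral sign. -/
def LocallyDominated (ν : Measure Y) (φ : X → Y → W) : Prop :=
  ∀ x₀, ∃ s ∈ nhds x₀, ∃ b : Y → ℝ, Integrable b ν ∧ ∀ᵐ y ∂ν, ∀ x ∈ s, ‖φ x y‖ ≤ b y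

theorem LocallyDominated.integrable {φ : X → Y → W} (hφ : LocallyDominated ν φ) {x : X}
    (hmeas : AEStronglyMeasurable (φ x) ν) : Integrable (φ x) ν := by
  obtain ⟨s, hs, b, hb, hle⟩ := hφ x
  exact hb.mono' hmeas (hle.mono fun y hy => hy x (mem_of_mem_nhds hs))

variable [NormedSpace ℝ W]

theorem LocallyDominated.continuous_integral [FirstCountableTopology X] {φ : X → Y → W}
    (hφ : LocallyDominated ν φ) (hmeas : ∀ x, AEStronglyMeasurable (φ x) ν)
    (hcont : ∀ᵐ y ∂ν, Continuous (φ · y)) : Continuous fun x => ∫ y, φ x y ∂ν := by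
  refine continuous_iff_continuousAt.2 fun x => ?_
  obtain ⟨s, hs, b, hb, hle⟩ := hφ x
  exact continuousAt_of_dominated (Eventually.of_forall hmeas)
    (eventually_of_mem hs fun x hx => hle.mono fun y hy => hy x hx) hb
    (hcont.mono fun y hy => hy.continuousAt)

variable [NormedAddCommGroup E] [NormedSpace ℝ E]

theorem LocallyDominated.hasFDerivAt_integral {φ : E → Y → W} {φ' : E → Y → E →L[ℝ] W}
    (hφ' : LocallyDominated ν φ') (hint : ∀ x, Integrable (φ x) ν)
    (hmeas : ∀ x, AEStronglyMeasurable (φ' x) ν)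
    (hderiv : ∀ᵐ y ∂ν, ∀ x, HasFDerivAt (φ · y) (φ' x y) x) (x : E) :
    HasFDerivAt (fun x => ∫ y, φ x y ∂ν) (∫ y, φ' x y ∂ν) x := by
  obtain ⟨s, hs, b, hb, hle⟩ := hφ' x
  exact hasFDerivAt_integral_of_dominated_of_fderiv_le hs
    (Eventually.of_forall fun x => (hint x).aestronglyMeasurable) (hint x) (hmeas x) hle hb
    (hderiv.mono fun y hy x _ => hy x)

theorem curryLeft_integral {i : ℕ} (c : Y → E [×(i + 1)]→L[ℝ] W) :
    (∫ y, c y ∂ν).curryLeft = ∫ y, (c y).curryLeft ∂ν := by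
  let curry := continuousMultilinearCurryLeftEquiv ℝ (fun _ : Fin (i + 1) => E) W
  exact (ContinuousLinearEquiv.integral_comp_comm (𝕜 := ℝ) (F := E →L[ℝ] E [×i]→L[ℝ] W)
    curry.toContinuousLinearEquiv c).symm

theorem hasFTaylorSeriesUpTo_integral {N : WithTop ℕ∞} {φ : E → Y → W}
    {p : E → Y → FormalMultilinearSeries ℝ E W}
    (hp : ∀ᵐ y ∂ν, HasFTaylorSeriesUpTo N (φ · y) (p · y))
    (hmeas : ∀ i : ℕ, i ≤ N → ∀ x, AEStronglyMeasurable (fun y => p x y i) ν)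
    (hdom : ∀ i : ℕ, i ≤ N → LocallyDominated ν fun x y => p x y i) :
    HasFTaylorSeriesUpTo N (fun x => ∫ y, φ x y ∂ν) fun x i => ∫ y, p x y i ∂ν := by
  have hint (i : ℕ) (hi : i ≤ N) (x : E) : Integrable (fun y => p x y i) ν :=
    (hdom i hi).integrable (hmeas i hi x)
  refine ⟨fun x => ?_, fun i hi x => ?_, fun i hi => ?_⟩
  · rw [ContinuousMultilinearMap.curry0_apply,
      ContinuousMultilinearMap.integral_apply (hint 0 (by simp) x)]
    exact integral_congr_ae (hp.mono fun y hy => hy.zero_eq x)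
  · have hsucc : ((i + 1 : ℕ) : WithTop ℕ∞) ≤ N := ENat.add_one_natCast_le_withTop_of_lt hi
    have hcurry_dom : LocallyDominated ν fun x y => (p x y (i + 1)).curryLeft := by
      simpa only [LocallyDominated, ContinuousMultilinearMap.curryLeft_norm] using
        hdom (i + 1) hsucc
    have hcurry_meas (x : E) : AEStronglyMeasurable (fun y => (p x y (i + 1)).curryLeft) ν :=
      (continuousMultilinearCurryLeftEquiv ℝ (fun _ : Fin (i + 1) => E)
        W).continuous.comp_aestronglyMeasurable (hmeas (i + 1) hsucc x)
    rw [curryLeft_integral]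
    exact hcurry_dom.hasFDerivAt_integral (hint i hi.le) hcurry_meas
      (hp.mono fun y hy x => hy.fderiv i hi x) x
  · exact (hdom i hi).continuous_integral (hmeas i hi) (hp.mono fun y hy => hy.cont i hi)

end ParametricIntegral

section PartialFunction

variable {E F W : Type*} [NormedAddCommGroup E] [NormedSpace ℝ E]
  [NormedAddCommGroup F] [NormedSpace ℝ F] [NormedAddCommGroup W] [NormedSpace ℝ W]
  {G : E × F → W} {i : ℕ}

theorem iteratedFDeriv_comp_prodMk_left (hG : ContDiff ℝ i G) (x : E) (y : F) :
    iteratedFDeriv ℝ i (fun x => G (x, y)) x =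
      (iteratedFDeriv ℝ i G (x, y)).compContinuousLinearMap
        fun _ => ContinuousLinearMap.inl ℝ E F := by
  have hshift : ContDiff ℝ i fun z => G (z + (0, y)) := by fun_prop
  have hcomp : (fun x => G (x, y)) =
      (fun z => G (z + (0, y))) ∘ ContinuousLinearMap.inl ℝ E F := by
    ext x
    simp
  rw [hcomp, (ContinuousLinearMap.inl ℝ E F).iteratedFDeriv_comp_right hshift x le_rfl,
    iteratedFDeriv_comp_add_right]
  simp

theorem norm_iteratedFDeriv_comp_prodMk_left_le (hG : ContDiff ℝ i G) (x : E) (y : F) :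
    ‖iteratedFDeriv ℝ i (fun x => G (x, y)) x‖ ≤ ‖iteratedFDeriv ℝ i G (x, y)‖ := by
  rw [iteratedFDeriv_comp_prodMk_left hG]
  refine (ContinuousMultilinearMap.norm_compContinuousLinearMap_le _ _).trans ?_
  exact mul_le_of_le_one_right (norm_nonneg _) <| Finset.prod_le_one (fun _ _ => norm_nonneg _)
    fun _ _ => ContinuousLinearMap.norm_inl_le_one ℝ E F

theorem continuous_iteratedFDeriv_comp_prodMk_left (hG : ContDiff ℝ i G) (x : E) :
    Continuous fun y => iteratedFDeriv ℝ i (fun x => G (x, y)) x := by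
  simp_rw [iteratedFDeriv_comp_prodMk_left hG]
  exact (ContinuousMultilinearMap.compContinuousLinearMapL
    (F := W) fun _ : Fin i => ContinuousLinearMap.inl ℝ E F).continuous.comp
    ((hG.continuous_iteratedFDeriv le_rfl).comp (by fun_prop))

end PartialFunction

section Landau

variable {g₁ g₂ : ℝ → ENNReal} {h₁ h₂ : ℝ → ℝ}

theorem isOEps_const {c : ENNReal} (hc : c ≠ ⊤) : IsOEps (fun _ => c) fun _ => 1 := by
  refine ⟨c.toReal + 1, by positivity, 1, one_pos, fun ε _ _ => ?_⟩
  rw [mul_one, ENNReal.le_ofReal_iff_toReal_le hc (by positivity)]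
  exact (lt_add_one _).le

theorem IsOEps.mul (hg₁ : IsOEps g₁ h₁) (hg₂ : IsOEps g₂ h₂) :
    IsOEps (fun ε => g₁ ε * g₂ ε) fun ε => h₁ ε * h₂ ε := by
  obtain ⟨C, hC, η, hη, hgC⟩ := hg₁
  obtain ⟨D, hD, θ, hθ, hgD⟩ := hg₂
  refine ⟨C * D, by positivity, min η θ, by positivity, fun ε hε hle => ?_⟩
  refine (mul_le_mul' (hgC ε hε (hle.trans (min_le_left _ _)))
    (hgD ε hε (hle.trans (min_le_right _ _)))).trans ?_
  rcases le_total 0 (C * h₁ ε) with hpos | hneg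
  · rw [← ENNReal.ofReal_mul hpos, mul_mul_mul_comm]
  · simp only [ENNReal.ofReal_of_nonpos hneg, zero_mul, zero_le]

theorem IsOEps.mono (hg : IsOEps g₂ h₁) (hle : ∀ ε ∈ Set.Ioc (0 : ℝ) 1, g₁ ε ≤ g₂ ε)
    (hle' : ∀ ε ∈ Set.Ioc (0 : ℝ) 1, h₁ ε ≤ h₂ ε) : IsOEps g₁ h₂ := by
  obtain ⟨C, hC, η, hη, hgC⟩ := hg
  refine ⟨C, hC, min η 1, by positivity, fun ε hε hεle => ?_⟩
  have hmem : ε ∈ Set.Ioc (0 : ℝ) 1 := ⟨hε, hεle.trans (min_le_right _ _)⟩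
  calc g₁ ε ≤ g₂ ε := hle ε hmem
    _ ≤ ENNReal.ofReal (C * h₁ ε) := hgC ε hε (hεle.trans (min_le_left _ _))
    _ ≤ ENNReal.ofReal (C * h₂ ε) := by gcongr; exact hle' ε hmem

end Landau

theorem TemperateGrowth'.contDiff {E : Type*} [NormedAddCommGroup E] [NormedSpace ℝ E]
    {f : E → ℂ} (hf : TemperateGrowth' f) (i : ℕ) : ContDiff ℝ i f :=
  hf.1.of_le (mod_cast le_top)

theorem mu_le_iff {E : Type*} [NormedAddCommGroup E] [NormedSpace ℝ E] {r : ℤ} {l : ℕ}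
    {f : E → ℂ} {C : ENNReal} :
    mu r l f ≤ C ↔
      ∀ i ≤ l, ∀ x, ‖iteratedFDeriv ℝ i f x‖ₑ ≤ C * ENNReal.ofReal ((1 + ‖x‖) ^ (-r)) := by
  simp only [mu, iSup_le_iff]
  rw [forall_comm]
  refine forall_congr' fun i => ?_
  rw [forall_comm]
  refine forall₂_congr fun _ x => ?_
  have hpos : 0 < (1 + ‖x‖) ^ r := by positivity
  rw [ENNReal.ofReal_mul hpos.le, ofReal_norm, zpow_neg, ENNReal.ofReal_inv_of_pos hpos,
    ← div_eq_mul_inv, ENNReal.le_div_iff_mul_le (by simp [hpos]) (by simp), mul_comm]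

section RapidDecrease

variable {F : Type*} [NormedAddCommGroup F] [NormedSpace ℝ F] [MeasurableSpace F]

/-- Measurable functions decreasing faster than every power of `1 + ‖y‖`: what remains of
`SchwartzLike` when no derivatives are required. -/
def RapidlyDecreasing (ν : Measure F) (g : F → ℂ) : Prop :=
  AEStronglyMeasurable g ν ∧ ∀ q : ℕ, mu (q : ℤ) 0 g < ⊤

/-- Nets of rapidly decreasing functions that are moderate for the weighted sup norms of order
zero: what remains of `IsESNet` when no derivatives are required. -/
def IsRapidlyDecreasingNet (ν : Measure F) (f : ℝ → F → ℂ) : Prop :=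
  (∀ ε ∈ Set.Ioc (0 : ℝ) 1, RapidlyDecreasing ν (f ε)) ∧
  ∀ q : ℕ, ∃ N : ℕ, IsOEps (fun ε => mu (q : ℤ) 0 (f ε)) fun ε => ε ^ (-(N : ℤ))

theorem SchwartzLike.rapidlyDecreasing [OpensMeasurableSpace F] {g : F → ℂ}
    (hg : SchwartzLike g) (ν : Measure F) : RapidlyDecreasing ν g :=
  ⟨hg.1.continuous.aestronglyMeasurable, fun q => hg.2 q 0⟩

theorem IsESNet.isRapidlyDecreasingNet [OpensMeasurableSpace F] {f : ℝ → F → ℂ}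
    (hf : IsESNet f) (ν : Measure F) : IsRapidlyDecreasingNet ν f :=
  ⟨fun ε hε => (hf.1 ε hε).rapidlyDecreasing ν, fun q => hf.2 q 0⟩

end RapidDecrease

section Weights

theorem one_add_norm_prodMk_le {E F : Type*} [SeminormedAddCommGroup E] [SeminormedAddCommGroup F]
    (x : E) (y : F) : 1 + ‖(x, y)‖ ≤ (1 + ‖x‖) * (1 + ‖y‖) := by
  have hmax : ‖(x, y)‖ ≤ ‖x‖ + ‖y‖ := max_le_add_of_nonneg (norm_nonneg x) (norm_nonneg y)
  linarith [mul_nonneg (norm_nonneg x) (norm_nonneg y)]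

theorem one_add_norm_prodMk_pow_mul_le {E F : Type*} [SeminormedAddCommGroup E]
    [SeminormedAddCommGroup F] (q : ℕ) (k : ℤ) (x : E) (y : F) :
    (1 + ‖(x, y)‖) ^ q * (1 + ‖y‖) ^ (-(q + k)) ≤ (1 + ‖x‖) ^ q * (1 + ‖y‖) ^ (-k) := by
  have hy : 1 + ‖y‖ ≠ 0 := by positivity
  calc (1 + ‖(x, y)‖) ^ q * (1 + ‖y‖) ^ (-(q + k))
      ≤ ((1 + ‖x‖) * (1 + ‖y‖)) ^ q * (1 + ‖y‖) ^ (-(q + k)) := by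
        gcongr
        exact one_add_norm_prodMk_le x y
    _ = (1 + ‖x‖) ^ q * (1 + ‖y‖) ^ (-k) := by
        rw [mul_pow, mul_assoc, ← zpow_natCast (1 + ‖y‖), ← zpow_add₀ hy]
        congr 2
        ring

theorem lintegral_one_add_norm_zpow_neg_integrablePower_ne_top {F : Type*}
    [NormedAddCommGroup F] [MeasurableSpace F] (ν : Measure F) [ν.HasTemperateGrowth] :
    ∫⁻ y, ENNReal.ofReal ((1 + ‖y‖) ^ (-(ν.integrablePower : ℤ))) ∂ν ≠ ⊤ := by
  simpa only [Real.rpow_neg_natCast] using ν.integrable_pow_neg_integrablePower.lintegral_lt_top.ne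

end Weights

section KernelOperator

variable {E F : Type*} [NormedAddCommGroup E] [NormedSpace ℝ E]
  [NormedAddCommGroup F] [NormedSpace ℝ F] {G : E × F → ℂ} {g : F → ℂ}

theorem iteratedFDeriv_kernel_mul {i : ℕ} (hG : ContDiff ℝ i G) (g : F → ℂ) (x : E) (y : F) :
    iteratedFDeriv ℝ i (fun x => G (x, y) * g y) x =
      g y • iteratedFDeriv ℝ i (fun x => G (x, y)) x := by
  simp_rw [mul_comm _ (g y), ← smul_eq_mul]
  exact iteratedFDeriv_const_smul_apply' (hG.comp (contDiff_prodMk_left y)).contDiffAt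

theorem enorm_iteratedFDeriv_kernel_mul_le {i l : ℕ} (hG : ContDiff ℝ i G) (hi : i ≤ l)
    (g : F → ℂ) (q k : ℕ) (x : E) (y : F) :
    ‖iteratedFDeriv ℝ i (fun x => G (x, y) * g y) x‖ₑ ≤
      mu (-(q : ℤ)) l G * mu ((q + k : ℕ) : ℤ) 0 g * ENNReal.ofReal ((1 + ‖x‖) ^ q) *
        ENNReal.ofReal ((1 + ‖y‖) ^ (-(k : ℤ))) := by
  have hGle : ‖iteratedFDeriv ℝ i (fun x => G (x, y)) x‖ₑ ≤
      mu (-(q : ℤ)) l G * ENNReal.ofReal ((1 + ‖(x, y)‖) ^ q) := by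
    refine (enorm_le_iff_norm_le.2 (norm_iteratedFDeriv_comp_prodMk_left_le hG x y)).trans ?_
    simpa only [neg_neg, zpow_natCast] using mu_le_iff (r := -(q : ℤ)).1 le_rfl i hi (x, y)
  have hgle : ‖g y‖ₑ ≤
      mu ((q + k : ℕ) : ℤ) 0 g * ENNReal.ofReal ((1 + ‖y‖) ^ (-(q + k : ℤ))) := by
    refine (enorm_le_iff_norm_le.2 (norm_iteratedFDeriv_zero (𝕜 := ℝ) (f := g)).ge).trans ?_
    exact_mod_cast mu_le_iff (r := ((q + k : ℕ) : ℤ)).1 le_rfl 0 le_rfl y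
  have hweights := ENNReal.ofReal_le_ofReal (one_add_norm_prodMk_pow_mul_le q k x y)
  rw [ENNReal.ofReal_mul (by positivity), ENNReal.ofReal_mul (by positivity)] at hweights
  rw [iteratedFDeriv_kernel_mul hG, enorm_smul, mul_comm, mul_assoc (_ * _)]
  calc ‖iteratedFDeriv ℝ i (fun x => G (x, y)) x‖ₑ * ‖g y‖ₑ
      ≤ (mu (-(q : ℤ)) l G * ENNReal.ofReal ((1 + ‖(x, y)‖) ^ q)) *
        (mu ((q + k : ℕ) : ℤ) 0 g * ENNReal.ofReal ((1 + ‖y‖) ^ (-(q + k : ℤ)))) :=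
        mul_le_mul' hGle hgle
    _ = mu (-(q : ℤ)) l G * mu ((q + k : ℕ) : ℤ) 0 g * (ENNReal.ofReal ((1 + ‖(x, y)‖) ^ q) *
        ENNReal.ofReal ((1 + ‖y‖) ^ (-(q + k : ℤ)))) := mul_mul_mul_comm _ _ _ _
    _ ≤ mu (-(q : ℤ)) l G * mu ((q + k : ℕ) : ℤ) 0 g * (ENNReal.ofReal ((1 + ‖x‖) ^ q) *
        ENNReal.ofReal ((1 + ‖y‖) ^ (-(k : ℤ)))) := by gcongr

variable [MeasurableSpace F] {ν : Measure F}

theorem aestronglyMeasurable_iteratedFDeriv_kernel_mul [OpensMeasurableSpace F]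
    [SecondCountableTopology F] {i : ℕ} (hG : ContDiff ℝ i G) (hg : AEStronglyMeasurable g ν)
    (x : E) :
    AEStronglyMeasurable (fun y => iteratedFDeriv ℝ i (fun x => G (x, y) * g y) x) ν := by
  simp_rw [iteratedFDeriv_kernel_mul hG]
  exact hg.smul (continuous_iteratedFDeriv_comp_prodMk_left hG x).aestronglyMeasurable

variable [OpensMeasurableSpace F] [ν.HasTemperateGrowth]

theorem locallyDominated_iteratedFDeriv_kernel_mul (hG : TemperateGrowth' G)
    (hg : RapidlyDecreasing ν g) (i : ℕ) :
    LocallyDominated ν fun x y => iteratedFDeriv ℝ i (fun x => G (x, y) * g y) x := by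
  intro x₀
  obtain ⟨q, hq⟩ := hG.2 i
  set k := ν.integrablePower
  set A : ENNReal := mu (-(q : ℤ)) i G * mu ((q + k : ℕ) : ℤ) 0 g *
    ENNReal.ofReal ((1 + (‖x₀‖ + 1)) ^ q)
  set b : F → ENNReal := fun y => A * ENNReal.ofReal ((1 + ‖y‖) ^ (-(k : ℤ)))
  have hA : A ≠ ⊤ :=
    ENNReal.mul_ne_top (ENNReal.mul_ne_top hq.ne (hg.2 (q + k)).ne) ENNReal.ofReal_ne_top
  have hb_int : ∫⁻ y, b y ∂ν ≠ ⊤ := by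
    rw [lintegral_const_mul' _ _ hA]
    exact ENNReal.mul_ne_top hA (lintegral_one_add_norm_zpow_neg_integrablePower_ne_top ν)
  refine ⟨Metric.ball x₀ 1, Metric.ball_mem_nhds _ one_pos, fun y => (b y).toReal,
    integrable_toReal_of_lintegral_ne_top (by fun_prop) hb_int, ae_of_all _ fun y x hx => ?_⟩
  rw [← toReal_enorm]
  refine ENNReal.toReal_mono (ENNReal.mul_ne_top hA ENNReal.ofReal_ne_top) ?_
  have hx_norm : ‖x‖ ≤ ‖x₀‖ + 1 := by
    linarith [norm_le_norm_add_norm_sub' x x₀, mem_ball_iff_norm.1 hx]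
  refine (enorm_iteratedFDeriv_kernel_mul_le (hG.contDiff i) le_rfl g q k x y).trans ?_
  simp only [b, A]
  gcongr

variable [SecondCountableTopology F]

theorem integrable_kernel_mul (hG : TemperateGrowth' G) (hg : RapidlyDecreasing ν g) (x : E) :
    Integrable (fun y => G (x, y) * g y) ν := by
  have hint := (locallyDominated_iteratedFDeriv_kernel_mul hG hg 0).integrable
    (aestronglyMeasurable_iteratedFDeriv_kernel_mul (hG.contDiff 0) hg.1 x)
  have hmeas : AEStronglyMeasurable (fun y => G (x, y) * g y) ν :=
    (hG.1.continuous.comp (by fun_prop)).aestronglyMeasurable.mul hg.1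
  refine hint.mono hmeas (ae_of_all _ fun y => ?_)
  rw [norm_iteratedFDeriv_zero]

theorem hasFTaylorSeriesUpTo_integral_kernel_mul (hG : TemperateGrowth' G)
    (hg : RapidlyDecreasing ν g) :
    HasFTaylorSeriesUpTo (⊤ : ℕ∞) (fun x => ∫ y, G (x, y) * g y ∂ν)
      fun x i => ∫ y, iteratedFDeriv ℝ i (fun x => G (x, y) * g y) x ∂ν :=
  hasFTaylorSeriesUpTo_integral
    (p := fun x y => ftaylorSeries ℝ (fun x => G (x, y) * g y) x)
    (ae_of_all _ fun y =>
      ((hG.1.comp (contDiff_prodMk_left y)).mul contDiff_const).ftaylorSeries)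
    (fun i _ => aestronglyMeasurable_iteratedFDeriv_kernel_mul (hG.contDiff i) hg.1)
    fun i _ => locallyDominated_iteratedFDeriv_kernel_mul hG hg i

theorem mu_integral_kernel_mul_le (hG : TemperateGrowth' G) (hg : RapidlyDecreasing ν g)
    (q l : ℕ) :
    mu (-(q : ℤ)) l (fun x => ∫ y, G (x, y) * g y ∂ν) ≤
      mu (-(q : ℤ)) l G * mu ((q + ν.integrablePower : ℕ) : ℤ) 0 g *
        ∫⁻ y, ENNReal.ofReal ((1 + ‖y‖) ^ (-(ν.integrablePower : ℤ))) ∂ν := by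
  refine mu_le_iff.2 fun i hi x => ?_
  rw [← (hasFTaylorSeriesUpTo_integral_kernel_mul hG hg).eq_iteratedFDeriv
    (mod_cast le_top) x]
  refine (enorm_integral_le_lintegral_enorm _).trans <| (lintegral_mono fun y =>
    enorm_iteratedFDeriv_kernel_mul_le (hG.contDiff i) hi g q ν.integrablePower x y).trans_eq ?_
  rw [lintegral_const_mul _ (by fun_prop), neg_neg, zpow_natCast, mul_right_comm]

theorem TemperateGrowth'.integral_kernel_mul (hG : TemperateGrowth' G)
    (hg : RapidlyDecreasing ν g) : TemperateGrowth' fun x => ∫ y, G (x, y) * g y ∂ν := by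
  refine ⟨(hasFTaylorSeriesUpTo_integral_kernel_mul hG hg).contDiff, fun l => ?_⟩
  obtain ⟨q, hq⟩ := hG.2 l
  exact ⟨q, (mu_integral_kernel_mul_le hG hg q l).trans_lt <| ENNReal.mul_lt_top
    (ENNReal.mul_lt_top hq (hg.2 _))
    (lintegral_one_add_norm_zpow_neg_integrablePower_ne_top ν).lt_top⟩

theorem IsEtauNet.integral_kernel_mul {H : ℝ → E × F → ℂ} (hH : IsEtauNet H) {f : ℝ → F → ℂ}
    (hf : IsRapidlyDecreasingNet ν f) : IsEtauNet fun ε x => ∫ y, H ε (x, y) * f ε y ∂ν := by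
  refine ⟨fun ε hε => (hH.1 ε hε).integral_kernel_mul (hf.1 ε hε), fun l => ?_⟩
  obtain ⟨q, N, hN⟩ := hH.2 l
  obtain ⟨M, hM⟩ := hf.2 (q + ν.integrablePower)
  have hconst := isOEps_const (lintegral_one_add_norm_zpow_neg_integrablePower_ne_top ν)
  refine ⟨q, N + M, ((hN.mul hM).mul hconst).mono
    (fun ε hε => mu_integral_kernel_mul_le (hH.1 ε hε) (hf.1 ε hε) q l) fun ε hε => ?_⟩
  rw [mul_one, ← zpow_add₀ hε.1.ne', Nat.cast_add, neg_add]

end KernelOperator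

theorem stmt7_general {E F : Type*} [NormedAddCommGroup E] [NormedSpace ℝ E]
    [NormedAddCommGroup F] [NormedSpace ℝ F] [MeasurableSpace F] [OpensMeasurableSpace F]
    [SecondCountableTopology F] {ν : Measure F} [ν.HasTemperateGrowth]
    {H : ℝ → E × F → ℂ} (hH : IsEtauNet H) {f : ℝ → F → ℂ} (hf : IsRapidlyDecreasingNet ν f) :
    (∀ ε ∈ Set.Ioc (0 : ℝ) 1, ∀ x, Integrable (fun y => H ε (x, y) * f ε y) ν) ∧
    IsEtauNet fun ε x => ∫ y, H ε (x, y) * f ε y ∂ν :=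
  ⟨fun ε hε => integrable_kernel_mul (hH.1 ε hε) (hf.1 ε hε), hH.integral_kernel_mul hf⟩

/-- a kernel net in `E_τ(ℝ^{m+n})` applied to a net in `E_S(ℝ^n)` gives a
well-defined net of integrals belonging to `E_τ(ℝ^m)`. -/
theorem stmt7 (m n : ℕ) (hm : 1 ≤ m) (hn : 1 ≤ n)
    (H : ℝ → ((Fin m → ℝ) × (Fin n → ℝ)) → ℂ) (hH : IsEtauNet H)
    (f : ℝ → (Fin n → ℝ) → ℂ) (hf : IsESNet f) :
    (∀ ε ∈ Set.Ioc (0:ℝ) 1, ∀ x : Fin m → ℝ,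
      MeasureTheory.Integrable (fun y : Fin n → ℝ => H ε (x, y) * f ε y)) ∧
    IsEtauNet (fun ε (x : Fin m → ℝ) => ∫ y : Fin n → ℝ, H ε (x, y) * f ε y) :=
  stmt7_general hH (hf.isRapidlyDecreasingNet volume)
end
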